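/- arXiv:2503.00229 — 9 statements merged into one kernel-verified Lean document; each statement's English description precedes it below -/
import Mathlib

section
/- Let f : ℝ^d → ℝ be twice continuously differentiable and nonnegative, and suppose there exist constants L_c > 0 and L_g > 0 such that ‖∇²f(θ)‖ ≤ L_c + L_g·‖∇f(θ)‖ for all θ ∈ ℝ^d (operator norm of the Hessian). Then for all θ ∈ ℝ^d: (i) ‖∇f(θ)‖ ≤ (8L_g + √(2L_c))·f(θ) + √(2L_c), and (ii) ‖∇²f(θ)‖ ≤ (L_c + L_g·√(2L_c)) + L_g·(8L_g + √(2L_c))·f(θ). -/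
/-!
Write `g = ‖∇f(θ)‖` and move from `θ` along the unit vector `u = -∇f(θ)/g`. By Grönwall's
inequality the gradient changes by at most `(Lc + Lg g)/Lg * (exp (Lg t) - 1)` after time `t`, hence
by at most `M t` with `M = 2 (Lc + Lg g)` as long as `Lg t ≤ 1/2` (`fderiv_sub_le`). Integrating,
`f(θ + t u) ≤ f(θ) - g t + M t² / 2`. The minimiser `t = g / M` of the right-hand side satisfies
`Lg t ≤ 1/2`, so `0 ≤ f(θ + t u)` yields `g² ≤ 4 (Lc + Lg g) f(θ)` (`sq_norm_fderiv_le`). Solving this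
quadratic inequality for `g` gives the gradient bound; the Hessian bound follows by inserting it into
the smoothness hypothesis.
-/

theorem norm_gradient_eq {d : ℕ} (f : EuclideanSpace ℝ (Fin d) → ℝ)
    (θ : EuclideanSpace ℝ (Fin d)) : ‖gradient f θ‖ = ‖fderiv ℝ f θ‖ := by
  simp [gradient]

/-- The linear growth of the derivative along a short segment in a unit direction, from Grönwall's
inequality applied to `t ↦ Df(θ + t u) - Df(θ)`. -/
theorem fderiv_sub_le {d : ℕ} (f : EuclideanSpace ℝ (Fin d) → ℝ)
    (hf : ContDiff ℝ 2 f) (Lc Lg : ℝ) (hLc : 0 < Lc) (hLg : 0 < Lg)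
    (hH : ∀ θ, ‖fderiv ℝ (fun t => fderiv ℝ f t) θ‖ ≤ Lc + Lg * ‖fderiv ℝ f θ‖)
    (θ u : EuclideanSpace ℝ (Fin d)) (hu : ‖u‖ = 1) (t : ℝ) (ht : 0 ≤ t) (ht' : Lg * t ≤ 1 / 2) :
    ‖fderiv ℝ f (θ + t • u) - fderiv ℝ f θ‖ ≤ 2 * (Lc + Lg * ‖fderiv ℝ f θ‖) * t := by
  have hd : Differentiable ℝ (fun t => fderiv ℝ f t) :=
    (hf.fderiv_right (m := 1) (by norm_num)).differentiable (by norm_num)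
  have hder : ∀ s : ℝ, HasDerivAt (fun s : ℝ => fderiv ℝ f (θ + s • u) - fderiv ℝ f θ)
      (fderiv ℝ (fun t => fderiv ℝ f t) (θ + s • u) u) s := by
    intro s
    have h1 : HasDerivAt (fun s : ℝ => θ + s • u) u s := by
      simpa using ((hasDerivAt_id s).smul_const u).const_add θ
    exact ((hd (θ + s • u)).hasFDerivAt.comp_hasDerivAt s h1).sub_const _
  have key := norm_le_gronwallBound_of_norm_deriv_right_le (a := 0) (b := t) (δ := 0) (K := Lg)
    (ε := Lc + Lg * ‖fderiv ℝ f θ‖)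
    (fun s _ => (hder s).continuousAt.continuousWithinAt)
    (fun s _ => (hder s).hasDerivWithinAt) (by simp)
    (fun s _ => by
      have h1 := (fderiv ℝ (fun t => fderiv ℝ f t) (θ + s • u)).le_opNorm u
      rw [hu, mul_one] at h1
      have h2 := hH (θ + s • u)
      have h3 : ‖fderiv ℝ f (θ + s • u)‖ ≤
          ‖fderiv ℝ f (θ + s • u) - fderiv ℝ f θ‖ + ‖fderiv ℝ f θ‖ := by
        simpa using norm_add_le (fderiv ℝ f (θ + s • u) - fderiv ℝ f θ) (fderiv ℝ f θ)
      nlinarith [mul_le_mul_of_nonneg_left h3 hLg.le])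
    t ⟨ht, le_rfl⟩
  rw [gronwallBound_of_K_ne_0 hLg.ne'] at key
  simp only [sub_zero, zero_mul, zero_add] at key
  -- `exp x - 1 ≤ 2 x` on `[0, 1/2]`, from `exp (-x) ≥ 1 - x`.
  have hexp : Real.exp (Lg * t) - 1 ≤ 2 * (Lg * t) := by
    have h0 : 0 ≤ Lg * t := by positivity
    have h1 := Real.add_one_le_exp (-(Lg * t))
    have h2 : Real.exp (Lg * t) * Real.exp (-(Lg * t)) = 1 := by
      rw [← Real.exp_add]; simp
    have h3 := Real.exp_pos (Lg * t)
    have h4 : Real.exp (Lg * t) * (1 - Lg * t) ≤ 1 := by nlinarith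
    by_contra! hc
    nlinarith
  refine key.trans ?_
  calc _ ≤ (Lc + Lg * ‖fderiv ℝ f θ‖) / Lg * (2 * (Lg * t)) := by gcongr
    _ = _ := by field_simp

theorem sq_norm_fderiv_le {d : ℕ} (f : EuclideanSpace ℝ (Fin d) → ℝ)
    (hf : ContDiff ℝ 2 f) (hnn : ∀ θ, 0 ≤ f θ) (Lc Lg : ℝ) (hLc : 0 < Lc) (hLg : 0 < Lg)
    (hH : ∀ θ, ‖fderiv ℝ (fun t => fderiv ℝ f t) θ‖ ≤ Lc + Lg * ‖fderiv ℝ f θ‖)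
    (θ : EuclideanSpace ℝ (Fin d)) :
    ‖fderiv ℝ f θ‖ ^ 2 ≤ 4 * (Lc + Lg * ‖fderiv ℝ f θ‖) * f θ := by
  have hfd : Differentiable ℝ f := hf.differentiable (by norm_num)
  rcases (norm_nonneg (fderiv ℝ f θ)).eq_or_lt with h0 | hpos
  · rw [← h0]
    have := hnn θ
    simp only [mul_zero, add_zero, ne_eq, OfNat.ofNat_ne_zero, not_false_eq_true, zero_pow]
    positivity
  -- the normalised direction of steepest descent
  obtain ⟨u, hu, hfu⟩ : ∃ u : EuclideanSpace ℝ (Fin d), ‖u‖ = 1 ∧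
      fderiv ℝ f θ u = -‖fderiv ℝ f θ‖ := by
    refine ⟨-(‖fderiv ℝ f θ‖⁻¹ • gradient f θ), ?_, ?_⟩
    · rw [norm_neg, norm_smul, norm_gradient_eq, norm_inv, norm_norm, inv_mul_cancel₀ hpos.ne']
    · have h : fderiv ℝ f θ (gradient f θ) = ‖fderiv ℝ f θ‖ ^ 2 := by
        rw [← norm_gradient_eq, ← real_inner_self_eq_norm_sq]
        exact (InnerProductSpace.toDual_symm_apply (𝕜 := ℝ)).symm
      rw [map_neg, map_smul, h, smul_eq_mul]
      field_simp
  have hbd := fderiv_sub_le f hf Lc Lg hLc hLg hH θ u hu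
  set g := ‖fderiv ℝ f θ‖ with hg
  set M := 2 * (Lc + Lg * g) with hM
  have hMpos : 0 < M := by positivity
  set T := g / M with hT
  have hTpos : 0 ≤ T := by positivity
  have hLT : Lg * T ≤ 1 / 2 := by
    rw [hT, ← mul_div_assoc, div_le_iff₀ hMpos]
    linarith
  have hder : ∀ s : ℝ, HasDerivAt (fun s : ℝ => f (θ + s • u) + g * s - M / 2 * s ^ 2)
      (fderiv ℝ f (θ + s • u) u + g - M * s) s := by
    intro s
    have h1 : HasDerivAt (fun s : ℝ => θ + s • u) u s := by
      simpa using ((hasDerivAt_id s).smul_const u).const_add θ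
    have h2 := (hfd (θ + s • u)).hasFDerivAt.comp_hasDerivAt s h1
    have h3 := (h2.add ((hasDerivAt_id s).const_mul g)).sub
      (((hasDerivAt_id s).pow 2).const_mul (M / 2))
    refine h3.congr_deriv ?_
    simp only [id]
    push_cast
    ring
  have hanti : AntitoneOn (fun s : ℝ => f (θ + s • u) + g * s - M / 2 * s ^ 2) (Set.Icc 0 T) := by
    refine antitoneOn_of_deriv_nonpos (convex_Icc 0 T)
      (fun s _ => (hder s).continuousAt.continuousWithinAt)
      (fun s _ => (hder s).differentiableAt.differentiableWithinAt) ?_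
    intro s hs
    rw [interior_Icc] at hs
    rw [(hder s).deriv]
    have h1 := hbd s hs.1.le (by nlinarith [hs.2])
    have h2 := (fderiv ℝ f (θ + s • u) - fderiv ℝ f θ).le_opNorm u
    rw [hu, mul_one, sub_apply, hfu] at h2
    have h3 := Real.le_norm_self (fderiv ℝ f (θ + s • u) u - -g)
    linarith
  have hfin := hanti ⟨le_rfl, hTpos⟩ ⟨hTpos, le_rfl⟩ hTpos
  simp only [zero_smul, add_zero, mul_zero] at hfin
  have hn := hnn (θ + T • u)
  have hTM : T * M = g := by rw [hT]; field_simp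
  have h1 : g * T - M / 2 * T ^ 2 ≤ f θ := by
    norm_num at hfin
    linarith
  have h2 : g * T / 2 ≤ f θ := by
    have : M / 2 * T ^ 2 = g * T / 2 := by rw [← hTM]; ring
    linarith
  calc g ^ 2 = 2 * M * (g * T / 2) := by linear_combination (-g) * hTM
    _ ≤ 2 * M * f θ := by gcongr
    _ = _ := by rw [hM]; ring

theorem stmt_0 {d : ℕ} (f : EuclideanSpace ℝ (Fin d) → ℝ)
    (hf : ContDiff ℝ 2 f) (hnn : ∀ θ, 0 ≤ f θ)
    (Lc Lg : ℝ) (hLc : 0 < Lc) (hLg : 0 < Lg)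
    (hH : ∀ θ, ‖fderiv ℝ (fun t => fderiv ℝ f t) θ‖ ≤ Lc + Lg * ‖gradient f θ‖) :
    ∀ θ : EuclideanSpace ℝ (Fin d),
      ‖gradient f θ‖ ≤ (8 * Lg + Real.sqrt (2 * Lc)) * f θ + Real.sqrt (2 * Lc) ∧
      ‖fderiv ℝ (fun t => fderiv ℝ f t) θ‖ ≤
        (Lc + Lg * Real.sqrt (2 * Lc)) + Lg * (8 * Lg + Real.sqrt (2 * Lc)) * f θ := by
  intro θ
  have key := sq_norm_fderiv_le f hf hnn Lc Lg hLc hLg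
    (fun x => by rw [← norm_gradient_eq]; exact hH x) θ
  rw [← norm_gradient_eq] at key
  have hfθ := hnn θ
  have main : ‖gradient f θ‖ ≤ (8 * Lg + Real.sqrt (2 * Lc)) * f θ + Real.sqrt (2 * Lc) := by
    set c := Real.sqrt (2 * Lc) with hc
    have hc2 : c ^ 2 = 2 * Lc := Real.sq_sqrt (by positivity)
    have hcpos : 0 < c := Real.sqrt_pos.mpr (by positivity)
    set g := ‖gradient f θ‖
    by_contra! h
    -- With `g > 8 Lg f + c (1 + f)`: `g² > 8 Lg f g + c² (1 + f)²`, and `c² (1 + f)² ≥ 4 Lc f`.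
    have hb : 0 < c * (1 + f θ) := by positivity
    have ha : 0 ≤ 8 * Lg * f θ := by positivity
    have hg1 : c * (1 + f θ) < g := by linarith
    have hgpos : 0 < g := hb.trans hg1
    have h1 : (8 * Lg * f θ + c * (1 + f θ)) * g < g ^ 2 := by nlinarith
    have h2 : (c * (1 + f θ)) ^ 2 ≤ c * (1 + f θ) * g := by nlinarith
    have h3 : (c * (1 + f θ)) ^ 2 = 2 * Lc * (1 + f θ) ^ 2 := by rw [mul_pow, hc2]
    have h4 : 4 * Lc * f θ ≤ 2 * Lc * (1 + f θ) ^ 2 := by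
      nlinarith [mul_nonneg hLc.le (sq_nonneg (f θ))]
    have h5 : 0 ≤ Lg * g * f θ := by positivity
    linarith
  refine ⟨main, (hH θ).trans ?_⟩
  linarith [mul_le_mul_of_nonneg_left main hLg.le]
end

section
/- Let C ≥ 1 and let π ∈ ℝ^C be a probability vector, i.e. π_i ≥ 0 for all i and Σ_{i=1}^C π_i = 1. Let H = diag(π) − π·πᵀ be the C × C matrix with entries H_{ii} = π_i − π_i² and H_{ij} = −π_i·π_j for i ≠ j. Then the operator norm of H satisfies ‖H‖ ≤ 2·max_{i} π_i·(1 − π_i). -/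
/-!
The matrix `H = diag(p) - p pᵀ` is the Laplacian of the weighted graph with edge weights
`w i j = p i * p j` (`i ≠ j`): since `p` sums to one, `(H x)_i = ∑ j, w i j * (x i - x j)`, and
the weighted degrees are `∑ j, w i j = p i * (1 - p i)`. The largest eigenvalue of a Laplacian is
at most twice the maximal degree `M`; `laplacian_sum_sq_le` shows this in the form
`‖H x‖² ≤ (2 M)² ‖x‖²`, by Cauchy–Schwarz in each row followed by
`(x i - x j)² ≤ 2 (x i)² + 2 (x j)²`.
-/

/-- A weighted graph Laplacian, with symmetric nonnegative weights and weighted degrees at most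
`M`, has `ℓ₂` operator norm at most `2 * M`. -/
theorem laplacian_sum_sq_le {ι : Type*} [Fintype ι] (w : ι → ι → ℝ) (hw : ∀ i j, 0 ≤ w i j)
    (hsymm : ∀ i j, w i j = w j i) (M : ℝ) (hM0 : 0 ≤ M) (hM : ∀ i, ∑ j, w i j ≤ M)
    (x : ι → ℝ) :
    ∑ i, (∑ j, w i j * (x i - x j)) ^ 2 ≤ (2 * M) ^ 2 * ∑ i, x i ^ 2 := by
  have hrow : ∀ i, (∑ j, w i j * (x i - x j)) ^ 2 ≤ M * ∑ j, w i j * (x i - x j) ^ 2 := by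
    intro i
    have hnn : ∀ j, 0 ≤ w i j * (x i - x j) ^ 2 := fun j => mul_nonneg (hw i j) (sq_nonneg _)
    calc (∑ j, w i j * (x i - x j)) ^ 2
        ≤ (∑ j, w i j) * ∑ j, w i j * (x i - x j) ^ 2 :=
          Finset.sum_sq_le_sum_mul_sum_of_sq_le_mul _ (fun j _ => hw i j) (fun j _ => hnn j)
            (fun j _ => le_of_eq (by ring))
      _ ≤ M * ∑ j, w i j * (x i - x j) ^ 2 :=
          mul_le_mul_of_nonneg_right (hM i) (Finset.sum_nonneg fun j _ => hnn j)
  have hdeg : ∑ i, ∑ j, w i j * x i ^ 2 ≤ M * ∑ i, x i ^ 2 := by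
    rw [Finset.mul_sum]
    refine Finset.sum_le_sum fun i _ => ?_
    rw [← Finset.sum_mul]
    exact mul_le_mul_of_nonneg_right (hM i) (sq_nonneg _)
  have hdeg' : ∑ i, ∑ j, w i j * x j ^ 2 = ∑ i, ∑ j, w i j * x i ^ 2 := by
    rw [Finset.sum_comm]
    exact Finset.sum_congr rfl fun i _ => Finset.sum_congr rfl fun j _ => by rw [hsymm]
  have hform : ∑ i, ∑ j, w i j * (x i - x j) ^ 2 ≤ 4 * (M * ∑ i, x i ^ 2) := by
    calc ∑ i, ∑ j, w i j * (x i - x j) ^ 2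
        ≤ ∑ i, ∑ j, (2 * (w i j * x i ^ 2) + 2 * (w i j * x j ^ 2)) := by
          refine Finset.sum_le_sum fun i _ => Finset.sum_le_sum fun j _ => ?_
          nlinarith [mul_nonneg (hw i j) (sq_nonneg (x i + x j))]
      _ = 2 * (∑ i, ∑ j, w i j * x i ^ 2) + 2 * ∑ i, ∑ j, w i j * x j ^ 2 := by
          simp only [Finset.sum_add_distrib, Finset.mul_sum]
      _ ≤ 4 * (M * ∑ i, x i ^ 2) := by rw [hdeg']; linarith
  calc ∑ i, (∑ j, w i j * (x i - x j)) ^ 2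
      ≤ ∑ i, M * ∑ j, w i j * (x i - x j) ^ 2 := Finset.sum_le_sum fun i _ => hrow i
    _ = M * ∑ i, ∑ j, w i j * (x i - x j) ^ 2 := by rw [Finset.mul_sum]
    _ ≤ M * (4 * (M * ∑ i, x i ^ 2)) := mul_le_mul_of_nonneg_left hform hM0
    _ = (2 * M) ^ 2 * ∑ i, x i ^ 2 := by ring

theorem stmt_5 {C : ℕ} (hC : 1 ≤ C) (p : Fin C → ℝ)
    (hnn : ∀ i, 0 ≤ p i) (hsum : ∑ i, p i = 1) :
    ‖Matrix.toEuclideanCLM (𝕜 := ℝ) (Matrix.diagonal p - Matrix.vecMulVec p p)‖ ≤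
      2 * ⨆ i, p i * (1 - p i) := by
  have hle : ∀ i, p i ≤ 1 := fun i =>
    hsum ▸ Finset.single_le_sum (fun j _ => hnn j) (Finset.mem_univ i)
  have hM0 : 0 ≤ ⨆ i, p i * (1 - p i) :=
    Real.iSup_nonneg fun i => mul_nonneg (hnn i) (sub_nonneg.2 (hle i))
  have hMi : ∀ i, p i * (1 - p i) ≤ ⨆ i, p i * (1 - p i) :=
    fun i => le_ciSup (Set.finite_range fun i => p i * (1 - p i)).bddAbove i
  set M := ⨆ i, p i * (1 - p i)
  set w : Fin C → Fin C → ℝ := fun i j => if i = j then 0 else p i * p j with hw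
  have hwdeg : ∀ i, ∑ j, w i j = p i * (1 - p i) := by
    intro i
    have h : ∀ j, w i j = p i * p j - if i = j then p i * p j else 0 := by
      intro j
      simp only [hw]
      split_ifs <;> ring
    simp only [h, Finset.sum_sub_distrib, Finset.sum_ite_eq, Finset.mem_univ, if_true,
      ← Finset.mul_sum, hsum]
    ring
  have hlap := laplacian_sum_sq_le w
    (fun i j => by
      simp only [hw]
      split_ifs
      exacts [le_rfl, mul_nonneg (hnn i) (hnn j)])
    (fun i j => by simp only [hw, eq_comm (a := i), mul_comm (p i)])
    M hM0 (fun i => (hwdeg i).trans_le (hMi i))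
  refine ContinuousLinearMap.opNorm_le_bound _ (by positivity) fun x => ?_
  refine le_of_sq_le_sq ?_ (by positivity)
  rw [mul_pow, EuclideanSpace.real_norm_sq_eq, EuclideanSpace.real_norm_sq_eq]
  refine le_of_eq_of_le (Finset.sum_congr rfl fun i _ => ?_) (hlap x.ofLp)
  congr 1
  rw [Matrix.ofLp_toEuclideanCLM, Matrix.sub_mulVec, Pi.sub_apply, Matrix.mulVec_diagonal,
    Matrix.vecMulVec_mulVec]
  -- The diagonal term carries the factor `x i - x i = 0`, so the weight there is immaterial.
  have h : ∀ j, w i j * (x.ofLp i - x.ofLp j) = p i * x.ofLp i * p j - p i * (p j * x.ofLp j) := by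
    intro j
    simp only [hw]
    split_ifs with hij
    · subst hij; ring
    · ring
  simp only [h, Finset.sum_sub_distrib, ← Finset.mul_sum, hsum]
  simp [dotProduct, mul_comm]
end

section
/- Let K ≥ 1, let r ∈ ℝ^K satisfy 0 ≤ r(a) ≤ 1 for all a, and let a* be an index with r(a*) = max_a r(a). For θ ∈ ℝ^K define the softmax policy π_θ(a) = exp(θ(a)) / Σ_{a'} exp(θ(a')) and the expected reward g(θ) = Σ_a π_θ(a)·r(a). Then for every θ ∈ ℝ^K, ‖∇g(θ)‖ ≥ π_θ(a*)·( r(a*) − g(θ) ). -/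
/-!
The norm of a gradient dominates its inner product with any unit vector. Taking the basis vector
`e` at `astar`, this inner product is the partial derivative of the expected reward in the
coordinate `astar`, which the quotient rule identifies with `π(astar) * (r astar - g)`.
-/

/-- An exponential sum weighted by `w`, restricted to the line through `θ` in the direction of the
`b`-th coordinate: only the `b`-th term contributes to its derivative. Weights `r` and `1` give the
numerator and the denominator of the expected reward. -/
lemma hasDerivAt_expSum_line {K : ℕ} (w : Fin K → ℝ) (b : Fin K)
    (θ : EuclideanSpace ℝ (Fin K)) :
    HasDerivAt (fun s : ℝ => ∑ a, Real.exp ((θ + s • EuclideanSpace.single b (1 : ℝ)) a) * w a)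
      (Real.exp (θ b) * w b) 0 := by
  have h : ∀ a ∈ (Finset.univ : Finset (Fin K)), HasDerivAt
      (fun s : ℝ => Real.exp ((θ + s • EuclideanSpace.single b (1 : ℝ)) a) * w a)
      (if a = b then Real.exp (θ b) * w b else 0) 0 := by
    intro a _
    have h1 : HasDerivAt (fun s : ℝ => θ a + s * (if a = b then (1 : ℝ) else 0))
        (1 * (if a = b then (1 : ℝ) else 0)) 0 :=
      ((hasDerivAt_id (0 : ℝ)).mul_const _).const_add _
    refine (h1.exp.mul_const (w a)).congr_deriv ?_ |>.congr_of_eventuallyEq ?_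
    · by_cases hab : a = b <;> simp [hab]
    · exact Filter.Eventually.of_forall fun s => by simp
  simpa using HasDerivAt.fun_sum h

theorem stmt_6 {K : ℕ} (hK : 1 ≤ K) (r : Fin K → ℝ)
    (hr : ∀ a, r a ∈ Set.Icc (0 : ℝ) 1)
    (astar : Fin K) (hastar : ∀ a, r a ≤ r astar) :
    ∀ θ : EuclideanSpace ℝ (Fin K),
      (Real.exp (θ astar) / ∑ a', Real.exp (θ a')) *
          (r astar - ∑ a, (Real.exp (θ a) / ∑ a', Real.exp (θ a')) * r a) ≤
        ‖gradient (fun t : EuclideanSpace ℝ (Fin K) =>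
            ∑ a, (Real.exp (t a) / ∑ a', Real.exp (t a')) * r a) θ‖ := by
  intro θ
  have hpos : ∀ t : EuclideanSpace ℝ (Fin K), 0 < ∑ a', Real.exp (t a') := fun t =>
    Finset.sum_pos (fun a _ => Real.exp_pos _) ⟨astar, Finset.mem_univ _⟩
  have hquot : ∀ t : EuclideanSpace ℝ (Fin K),
      ∑ a, (Real.exp (t a) / ∑ a', Real.exp (t a')) * r a
        = (∑ a, Real.exp (t a) * r a) / ∑ a', Real.exp (t a') := by
    intro t
    rw [Finset.sum_div]
    exact Finset.sum_congr rfl fun a _ => by ring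
  simp only [hquot]
  set f : EuclideanSpace ℝ (Fin K) → ℝ :=
    fun t => (∑ a, Real.exp (t a) * r a) / ∑ a', Real.exp (t a') with hf
  set e : EuclideanSpace ℝ (Fin K) := EuclideanSpace.single astar (1 : ℝ) with he
  have hdiff : DifferentiableAt ℝ f θ := by
    have hN : DifferentiableAt ℝ
        (fun t : EuclideanSpace ℝ (Fin K) => ∑ a, Real.exp (t a) * r a) θ := by fun_prop
    have hD : DifferentiableAt ℝ
        (fun t : EuclideanSpace ℝ (Fin K) => ∑ a, Real.exp (t a)) θ := by fun_prop
    simp only [hf, div_eq_mul_inv]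
    exact hN.fun_mul (hD.fun_inv (hpos θ).ne')
  have hline : HasDerivAt (fun s : ℝ => f (θ + s • e)) (fderiv ℝ f θ e) 0 :=
    hdiff.hasFDerivAt.hasLineDerivAt e
  have hnum := hasDerivAt_expSum_line r astar θ
  have hden := hasDerivAt_expSum_line (fun _ => 1) astar θ
  simp only [mul_one] at hden
  have hq := hnum.fun_div hden (hpos _).ne'
  have hval := hline.unique hq
  simp only [zero_smul, add_zero] at hval
  have hinner : inner ℝ (gradient f θ) e = fderiv ℝ f θ e := by
    simp [gradient]
  have hbound := real_inner_le_norm (gradient f θ) e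
  have hnorm : ‖e‖ = 1 := by simp [he]
  rw [hinner, hnorm, mul_one, hval] at hbound
  refine le_trans (le_of_eq ?_) hbound
  have := (hpos θ).ne'
  field_simp
end

section
/- Let f : ℝ^d → ℝ be twice continuously differentiable and nonnegative, and let L_0 > 0, L_1 > 0. Suppose that for every θ ∈ ℝ^d and every v ∈ ℝ^d, ⟨∇²f(θ)·v, v⟩ ≤ (L_0 + L_1·f(θ))·‖v‖² (i.e. ∇²f(θ) ⪯ (L_0 + L_1·f(θ))·I). Then the function g(θ) := ln(L_0 + L_1·f(θ)) satisfies ⟨∇²g(θ)·v, v⟩ ≤ L_1·‖v‖² for all θ, v ∈ ℝ^d (i.e. ∇²g(θ) ⪯ L_1·I, so g is L_1-uniformly smooth). -/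
/-!
Put `u = L0 + L1 * f`, which is positive. Differentiating `log u` twice gives
`∇²(log u) = (L1 / u) ∇²f - (L1 / u)² ∇f ∇fᵀ`. The rank-one term is nonpositive, and the
hypothesis `∇²f ⪯ u • I` bounds the first term by `L1 • I`.
-/

theorem stmt_7 {d : ℕ} (f : EuclideanSpace ℝ (Fin d) → ℝ)
    (hf : ContDiff ℝ 2 f) (hnn : ∀ θ, 0 ≤ f θ)
    (L0 L1 : ℝ) (hL0 : 0 < L0) (hL1 : 0 < L1)
    (hH : ∀ θ v, fderiv ℝ (fun t => fderiv ℝ f t) θ v v ≤ (L0 + L1 * f θ) * ‖v‖ ^ 2) :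
    ∀ θ v, fderiv ℝ (fun t => fderiv ℝ
        (fun z => Real.log (L0 + L1 * f z)) t) θ v v ≤ L1 * ‖v‖ ^ 2 := by
  intro θ v
  have hpos : ∀ t, 0 < L0 + L1 * f t := fun t => by
    have := mul_nonneg hL1.le (hnn t)
    linarith
  have hu : ∀ t, HasFDerivAt (fun z => L0 + L1 * f z) (L1 • fderiv ℝ f t) t := fun t =>
    ((hf.differentiable (by norm_num) t).hasFDerivAt.const_mul L1).const_add L0
  have hgrad : (fun t => fderiv ℝ (fun z => Real.log (L0 + L1 * f z)) t) =
      fun t => (L0 + L1 * f t)⁻¹ • (L1 • fderiv ℝ f t) :=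
    funext fun t => ((hu t).log (hpos t).ne').fderiv
  have hf' : HasFDerivAt (fun t => fderiv ℝ f t) (fderiv ℝ (fun t => fderiv ℝ f t) θ) θ :=
    ((hf.fderiv_right (m := 1) (by norm_num)).differentiable (by norm_num) θ).hasFDerivAt
  have hinv := (hasDerivAt_inv (hpos θ).ne').comp_hasFDerivAt θ (hu θ)
  have hhess := hinv.smul (hf'.const_smul L1)
  have hval : fderiv ℝ (fun t => fderiv ℝ (fun z => Real.log (L0 + L1 * f z)) t) θ v v =
      (L0 + L1 * f θ)⁻¹ * (L1 * fderiv ℝ (fun t => fderiv ℝ f t) θ v v) -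
        ((L0 + L1 * f θ)⁻¹ * (L1 * fderiv ℝ f θ v)) ^ 2 := by
    rw [hgrad]
    refine (congrArg (fun A => A v v) hhess.fderiv).trans ?_
    simp [← inv_pow]
    ring
  rw [hval]
  have h1 : (L0 + L1 * f θ)⁻¹ * (L1 * fderiv ℝ (fun t => fderiv ℝ f t) θ v v) ≤
      (L0 + L1 * f θ)⁻¹ * (L1 * ((L0 + L1 * f θ) * ‖v‖ ^ 2)) :=
    mul_le_mul_of_nonneg_left (mul_le_mul_of_nonneg_left (hH θ v) hL1.le)
      (inv_nonneg.2 (hpos θ).le)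
  have h2 : (L0 + L1 * f θ)⁻¹ * (L1 * ((L0 + L1 * f θ) * ‖v‖ ^ 2)) = L1 * ‖v‖ ^ 2 := by
    rw [mul_left_comm, inv_mul_cancel_left₀ (hpos θ).ne']
  have h3 := sq_nonneg ((L0 + L1 * f θ)⁻¹ * (L1 * fderiv ℝ f θ v))
  linarith
end

section
/- Let f : ℝ^d → ℝ be differentiable, bounded below with f* := inf f ≥ 0, let λ_0 ≥ 0, λ_1 > 0, R > 0, ε > 0, and let (θ_t)_{t≥0} be a sequence in ℝ^d such that for every t: f(θ_{t+1}) ≤ f(θ_t) − ‖∇f(θ_t)‖² / (λ_0 + λ_1·f(θ_t)) and ‖∇f(θ_t)‖² ≥ (f(θ_t) − f*)² / R. Then: (Case 1) if f* ≥ λ_0/λ_1 − ε, then for every natural number T ≥ max{2Rλ_1, 1}·(f*/ε + 1)·ln((f(θ_0) − f*)/ε), one has f(θ_T) − f* ≤ ε; (Case 2) if f* < λ_0/λ_1 − ε, then for every natural number T ≥ 2λ_0·R/ε + max{2Rλ_1, 1}·(f*/ε + 1)·ln((f(θ_0) − f*)/ε), one has f(θ_T) − f* ≤ ε. -/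
/-!
Write `δ t = f (θ t) - f*`. The two hypotheses give
`δ t ^ 2 ≤ R (λ₀ + λ₁ f (θ t)) (δ t - δ (t + 1))`. If `λ₁ f (θ t) ≥ λ₀`, the smoothness term is at most
`2 λ₁ f (θ t)`, and as long as `δ t > ε` also `f (θ t) ≤ (f*/ε + 1) δ t`, so `δ` contracts linearly
with constant `C = max (2 R λ₁) 1 * (f*/ε + 1)`. Otherwise the smoothness term is at most `2 λ₀`, and
`1/δ` grows by at least `1/K` with `K = 2 λ₀ R`. Hence, while `δ > ε`, every step decreases the
potential `C log (δ/ε) + K (1/ε - 1/δ)` by at least one, whichever regime it is in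
(`potential_argument`). The potential is positive for `δ > ε`, which bounds the number of such steps.
When `f* ≥ λ₀/λ₁ - ε`, the second regime never occurs and `K = 0` suffices.
-/

/-- Iteration count for a nonincreasing sequence whose steps, while it exceeds `ε`, are either
linear contractions with constant `C` or sublinear ones with constant `K`. Allowing `K = 0` covers
the purely linear case, since then the second alternative is impossible. -/
lemma potential_argument (δ : ℕ → ℝ) (ε C K : ℝ) (hε : 0 < ε) (hC : 0 < C) (hK : 0 ≤ K)
    (hanti : ∀ t, δ (t + 1) ≤ δ t)
    (hstep : ∀ t, ε < δ t →
      δ t ≤ C * (δ t - δ (t + 1)) ∨ δ t ^ 2 ≤ K * (δ t - δ (t + 1)))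
    (T : ℕ) (hT : K / ε + C * Real.log (δ 0 / ε) ≤ T) : δ T ≤ ε := by
  by_contra! hlt
  have key : ∀ t : ℕ, ε < δ t →
      C * Real.log (δ t / ε) - K / δ t + t ≤ C * Real.log (δ 0 / ε) - K / δ 0 := by
    intro t
    induction t with
    | zero => intro _; simp
    | succ t ih =>
      intro h1
      have h0 : ε < δ t := h1.trans_le (hanti t)
      have p1 : 0 < δ (t + 1) := hε.trans h1
      have p0 : 0 < δ t := hε.trans h0
      have hlog : δ t - δ (t + 1) ≤ δ t * (Real.log (δ t / ε) - Real.log (δ (t + 1) / ε)) := by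
        have := Real.log_le_sub_one_of_pos (div_pos p1 p0)
        rw [Real.log_div p1.ne' p0.ne'] at this
        rw [Real.log_div p0.ne' hε.ne', Real.log_div p1.ne' hε.ne']
        have h2 := mul_le_mul_of_nonneg_left this p0.le
        have h3 : δ t * (δ (t + 1) / δ t - 1) = δ (t + 1) - δ t := by field_simp
        linarith
      have hlog0 : 0 ≤ Real.log (δ t / ε) - Real.log (δ (t + 1) / ε) := by
        have := sub_nonneg.2 (hanti t)
        exact nonneg_of_mul_nonneg_right (this.trans hlog) p0
      have hinv : K / δ (t + 1) - K / δ t = K * (δ t - δ (t + 1)) / (δ t * δ (t + 1)) := by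
        field_simp
      have hinv0 : 0 ≤ K / δ (t + 1) - K / δ t := by
        rw [hinv]
        exact div_nonneg (mul_nonneg hK (sub_nonneg.2 (hanti t))) (by positivity)
      have hdrop : 1 ≤ C * (Real.log (δ t / ε) - Real.log (δ (t + 1) / ε))
          + (K / δ (t + 1) - K / δ t) := by
        rcases hstep t h0 with h | h
        · have h2 := mul_le_mul_of_nonneg_left hlog hC.le
          have : 1 ≤ C * (Real.log (δ t / ε) - Real.log (δ (t + 1) / ε)) := by
            refine le_of_mul_le_mul_left ?_ p0
            linarith
          linarith
        · have : 1 ≤ K / δ (t + 1) - K / δ t := by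
            rw [hinv, le_div_iff₀ (by positivity)]
            nlinarith [hanti t]
          linarith [mul_nonneg hC.le hlog0]
      have := ih h0
      push_cast
      linarith
  have hk := key T hlt
  have hlogT : 0 < C * Real.log (δ T / ε) :=
    mul_pos hC (Real.log_pos ((one_lt_div hε).2 hlt))
  have hKT : K / δ T ≤ K / ε := div_le_div_of_nonneg_left hK hε hlt.le
  have h0 : 0 ≤ K / δ 0 :=
    div_nonneg hK ((hε.trans hlt).le.trans (antitone_nat_of_succ_le hanti (Nat.zero_le T)))
  linarith

theorem stmt_9 {d : ℕ} (f : EuclideanSpace ℝ (Fin d) → ℝ)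
    (hdiff : Differentiable ℝ f) (hbdd : BddBelow (Set.range f))
    (fstar : ℝ) (hfs : fstar = ⨅ θ, f θ) (hfs0 : 0 ≤ fstar)
    (lam0 lam1 R ε : ℝ) (hlam0 : 0 ≤ lam0) (hlam1 : 0 < lam1) (hR : 0 < R) (hε : 0 < ε)
    (θ : ℕ → EuclideanSpace ℝ (Fin d))
    (hdec : ∀ t, f (θ (t + 1)) ≤ f (θ t) - ‖gradient f (θ t)‖ ^ 2 / (lam0 + lam1 * f (θ t)))
    (hgrad : ∀ t, (f (θ t) - fstar) ^ 2 / R ≤ ‖gradient f (θ t)‖ ^ 2) :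
    (fstar ≥ lam0 / lam1 - ε →
      ∀ T : ℕ, max (2 * R * lam1) 1 * (fstar / ε + 1) *
          Real.log ((f (θ 0) - fstar) / ε) ≤ T →
        f (θ T) - fstar ≤ ε) ∧
    (fstar < lam0 / lam1 - ε →
      ∀ T : ℕ, 2 * lam0 * R / ε + max (2 * R * lam1) 1 * (fstar / ε + 1) *
          Real.log ((f (θ 0) - fstar) / ε) ≤ T →
        f (θ T) - fstar ≤ ε) := by
  have hge : ∀ t, fstar ≤ f (θ t) := fun t => hfs ▸ ciInf_le hbdd (θ t)
  have hD : ∀ t, 0 ≤ lam0 + lam1 * f (θ t) := fun t =>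
    add_nonneg hlam0 (mul_nonneg hlam1.le (hfs0.trans (hge t)))
  have hanti : ∀ t, f (θ (t + 1)) - fstar ≤ f (θ t) - fstar := by
    intro t
    have := div_nonneg (sq_nonneg ‖gradient f (θ t)‖) (hD t)
    linarith [hdec t]
  have hquad : ∀ t, ε < f (θ t) - fstar → (f (θ t) - fstar) ^ 2 ≤
      R * (lam0 + lam1 * f (θ t)) * ((f (θ t) - fstar) - (f (θ (t + 1)) - fstar)) := by
    intro t ht
    have hpos : 0 < lam0 + lam1 * f (θ t) := by
      have := mul_pos hlam1 (show 0 < f (θ t) by linarith)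
      linarith
    have h1 : ‖gradient f (θ t)‖ ^ 2 ≤ (f (θ t) - f (θ (t + 1))) * (lam0 + lam1 * f (θ t)) := by
      rw [← div_le_iff₀ hpos]
      linarith [hdec t]
    have h2 := (div_le_iff₀ hR).1 ((hgrad t).trans h1)
    linarith
  have hA : 0 ≤ fstar / ε := div_nonneg hfs0 hε.le
  have hC : 0 < max (2 * R * lam1) 1 * (fstar / ε + 1) :=
    mul_pos (lt_max_of_lt_right one_pos) (by linarith)
  have hlin : ∀ t, ε < f (θ t) - fstar → lam0 ≤ lam1 * f (θ t) →
      f (θ t) - fstar ≤ max (2 * R * lam1) 1 * (fstar / ε + 1) *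
        ((f (θ t) - fstar) - (f (θ (t + 1)) - fstar)) := by
    intro t ht hl
    have hq := hquad t ht
    have ha := sub_nonneg.2 (hanti t)
    have hpos : 0 < f (θ t) - fstar := hε.trans ht
    have hf : f (θ t) ≤ (fstar / ε + 1) * (f (θ t) - fstar) := by
      have h1 := mul_le_mul_of_nonneg_left ht.le hA
      rw [div_mul_cancel₀ _ hε.ne'] at h1
      linarith
    have hcoef : R * (lam0 + lam1 * f (θ t)) ≤
        max (2 * R * lam1) 1 * ((fstar / ε + 1) * (f (θ t) - fstar)) :=
      calc R * (lam0 + lam1 * f (θ t)) ≤ R * (lam1 * f (θ t) + lam1 * f (θ t)) := by gcongr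
        _ = 2 * R * lam1 * f (θ t) := by ring
        _ ≤ max (2 * R * lam1) 1 * ((fstar / ε + 1) * (f (θ t) - fstar)) :=
          mul_le_mul (le_max_left _ _) hf (hfs0.trans (hge t)) (by positivity)
    have h3 := hq.trans (mul_le_mul_of_nonneg_right hcoef ha)
    refine le_of_mul_le_mul_left ?_ hpos
    linarith
  constructor
  · intro hcase T hT
    refine potential_argument (fun t => f (θ t) - fstar) ε _ 0 hε hC le_rfl hanti ?_ T
      (by simpa using hT)
    intro t ht
    refine Or.inl (hlin t ht ?_)
    have : lam0 / lam1 ≤ f (θ t) := by linarith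
    rw [div_le_iff₀ hlam1] at this
    linarith
  · intro _ T hT
    refine potential_argument (fun t => f (θ t) - fstar) ε _ (2 * lam0 * R) hε hC
      (by positivity) hanti ?_ T hT
    intro t ht
    rcases le_total lam0 (lam1 * f (θ t)) with hl | hl
    · exact Or.inl (hlin t ht hl)
    · refine Or.inr ((hquad t ht).trans (mul_le_mul_of_nonneg_right ?_ (sub_nonneg.2 (hanti t))))
      have := mul_le_mul_of_nonneg_left hl hR.le
      linarith
end

section
/- Let f : ℝ^d → ℝ be convex, differentiable and nonnegative, attaining its minimum at θ* ∈ ℝ^d with f* := f(θ*), let λ_1 > 0 and ε > 0. Let (θ_t)_{t≥0} be a sequence in ℝ^d with θ_{t+1} = θ_t − η_t·∇f(θ_t), where each η_t > 0 satisfies the Armijo condition with parameter c = 1/2, i.e. f(θ_{t+1}) ≤ f(θ_t) − (η_t/2)·‖∇f(θ_t)‖², and the lower bound η_t·λ_1·f(θ_t) ≥ 1. Then for every natural number T ≥ max{2·‖θ_0 − θ*‖²·λ_1, 1}·(f*/ε + 1)·ln((f(θ_0) − f*)/ε), one has f(θ_T) − f* ≤ ε. -/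
/-!
Write `δ t = f (θ t) - f θ*` and `D = ‖θ 0 - θ*‖`. The first-order inequality for convex functions
combined with the Armijo condition gives
`‖θ (t+1) - θ*‖² ≤ ‖θ t - θ*‖² - 2 η t * δ (t+1)`, so the iterates never move away from `θ*` and
`δ t ≤ ‖∇f (θ t)‖ * D` for all `t`. As long as `δ t > ε`, one has `f (θ t) ≤ (f θ* / ε + 1) * δ t`,
and the lower bound on the step-size then turns the Armijo decrease into the contraction
`δ (t+1) ≤ (1 - 1/C) * δ t` with `C = max (2 D² λ₁) 1 * (f θ* / ε + 1)`. If `δ T > ε`, monotonicity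
of `δ` makes the contraction available at every step before `T`, hence
`δ T ≤ exp (-T/C) * δ 0 ≤ ε`, a contradiction.
-/

/-- First-order characterization of convexity: the graph lies above its tangent hyperplanes.
It follows from the one-variable case along the segment from `x` to `y`. -/
lemma convex_sub_le_inner_gradient {d : ℕ} {f : EuclideanSpace ℝ (Fin d) → ℝ}
    (hconv : ConvexOn ℝ Set.univ f) (hdiff : Differentiable ℝ f)
    (x y : EuclideanSpace ℝ (Fin d)) :
    f x - f y ≤ inner ℝ (gradient f x) (x - y) := by
  have hc := hconv.comp_affineMap (AffineMap.lineMap (k := ℝ) x y)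
  rw [Set.preimage_univ] at hc
  have hline : HasDerivAt (AffineMap.lineMap (k := ℝ) x y) (y - x) 0 :=
    AffineMap.hasDerivAt_lineMap
  have hf : HasFDerivAt f (fderiv ℝ f x) (AffineMap.lineMap (k := ℝ) x y 0) := by
    simpa using (hdiff x).hasFDerivAt
  have h := hc.le_slope_of_hasDerivAt (Set.mem_univ 0) (Set.mem_univ 1) one_pos
    (hf.comp_hasDerivAt (0 : ℝ) hline)
  have hin : fderiv ℝ f x (y - x) = - inner ℝ (gradient f x) (x - y) := by
    rw [← toDual_gradient, InnerProductSpace.toDual_apply_apply, ← inner_neg_right, neg_sub]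
  rw [hin] at h
  simp only [slope_def_field, Function.comp_apply, AffineMap.lineMap_apply_zero,
    AffineMap.lineMap_apply_one, sub_zero, div_one] at h
  linarith

/-- An Armijo step with parameter `1/2` does not increase the distance to a minimizer. -/
lemma armijo_step_dist_le {d : ℕ} {f : EuclideanSpace ℝ (Fin d) → ℝ}
    (hconv : ConvexOn ℝ Set.univ f) (hdiff : Differentiable ℝ f)
    {θstar x x' : EuclideanSpace ℝ (Fin d)} (hmin : ∀ θ, f θstar ≤ f θ)
    {s : ℝ} (hs : 0 < s) (hx' : x' = x - s • gradient f x)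
    (harm : f x' ≤ f x - (s / 2) * ‖gradient f x‖ ^ 2) :
    ‖x' - θstar‖ ≤ ‖x - θstar‖ := by
  have hg := convex_sub_le_inner_gradient hconv hdiff x θstar
  have hexp : ‖x' - θstar‖ ^ 2 = ‖x - θstar‖ ^ 2
      - 2 * s * inner ℝ (gradient f x) (x - θstar) + s ^ 2 * ‖gradient f x‖ ^ 2 := by
    rw [hx', sub_right_comm, norm_sub_sq_real, inner_smul_right, norm_smul, Real.norm_eq_abs,
      mul_pow, sq_abs, real_inner_comm]
    ring
  refine le_of_sq_le_sq ?_ (norm_nonneg _)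
  have h1 := mul_le_mul_of_nonneg_left hg hs.le
  have h2 := mul_le_mul_of_nonneg_left harm hs.le
  have h3 := mul_le_mul_of_nonneg_left (hmin x') hs.le
  rw [hexp]
  nlinarith

theorem stmt_10 {d : ℕ} (f : EuclideanSpace ℝ (Fin d) → ℝ)
    (hconv : ConvexOn ℝ Set.univ f) (hdiff : Differentiable ℝ f)
    (hnn : ∀ θ, 0 ≤ f θ)
    (θstar : EuclideanSpace ℝ (Fin d)) (hmin : ∀ θ, f θstar ≤ f θ)
    (lam1 ε : ℝ) (hlam1 : 0 < lam1) (hε : 0 < ε)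
    (θ : ℕ → EuclideanSpace ℝ (Fin d)) (η : ℕ → ℝ) (hη : ∀ t, 0 < η t)
    (hupd : ∀ t, θ (t + 1) = θ t - η t • gradient f (θ t))
    (harm : ∀ t, f (θ (t + 1)) ≤ f (θ t) - (η t / 2) * ‖gradient f (θ t)‖ ^ 2)
    (hlb : ∀ t, 1 ≤ η t * lam1 * f (θ t)) :
    ∀ T : ℕ, max (2 * ‖θ 0 - θstar‖ ^ 2 * lam1) 1 * (f θstar / ε + 1) *
        Real.log ((f (θ 0) - f θstar) / ε) ≤ T →
      f (θ T) - f θstar ≤ ε := by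
  intro T hT
  by_contra! hlt
  have hdist : ∀ t, ‖θ t - θstar‖ ≤ ‖θ 0 - θstar‖ := by
    intro t
    induction t with
    | zero => exact le_rfl
    | succ t ih =>
      exact (armijo_step_dist_le hconv hdiff hmin (hη t) (hupd t) (harm t)).trans ih
  have hanti : Antitone fun t => f (θ t) := by
    refine antitone_nat_of_succ_le fun t => (harm t).trans ?_
    have := mul_nonneg (half_pos (hη t)).le (sq_nonneg ‖gradient f (θ t)‖)
    linarith
  have hgap : ∀ t ≤ T, ε < f (θ t) - f θstar := fun t ht => by
    have : f (θ T) ≤ f (θ t) := hanti ht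
    linarith
  set D := ‖θ 0 - θstar‖
  set M := max (2 * D ^ 2 * lam1) 1
  have hM0 : 2 * D ^ 2 * lam1 ≤ M := le_max_left _ _
  have hM1 : 1 ≤ M := le_max_right _ _
  have hK0 : 0 ≤ f θstar / ε := div_nonneg (hnn _) hε.le
  set C := M * (f θstar / ε + 1) with hC
  have hCpos : 0 < C := by positivity
  have hstep : ∀ t ≤ T, f (θ (t + 1)) - f θstar ≤ Real.exp (-(1 / C)) * (f (θ t) - f θstar) := by
    intro t ht
    have hδ := hgap t ht
    have hδ0 : 0 < f (θ t) - f θstar := hε.trans hδ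
    set δ := f (θ t) - f θstar with hδdef
    set G := ‖gradient f (θ t)‖ with hG
    have hδG : δ ≤ G * D :=
      (convex_sub_le_inner_gradient hconv hdiff _ _).trans <| (real_inner_le_norm _ _).trans <|
        mul_le_mul_of_nonneg_left (hdist t) (norm_nonneg _)
    have hsq : δ ^ 2 ≤ (G * D) ^ 2 := pow_le_pow_left₀ hδ0.le hδG 2
    have hfK : f (θ t) ≤ (f θstar / ε + 1) * δ := by
      have : f θstar / ε * ε ≤ f θstar / ε * δ := mul_le_mul_of_nonneg_left hδ.le hK0
      rw [div_mul_cancel₀ _ hε.ne'] at this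
      linarith
    -- The Armijo decrease is at least `δ / C`; the inequality is first proved times `δ`.
    have hkey : δ ≤ C * (η t / 2 * G ^ 2) := by
      refine le_of_mul_le_mul_right ?_ hδ0
      calc δ * δ = δ ^ 2 := by ring
        _ ≤ (G * D) ^ 2 * 1 := by simpa using hsq
        _ ≤ (G * D) ^ 2 * (η t * lam1 * f (θ t)) :=
          mul_le_mul_of_nonneg_left (hlb t) (sq_nonneg _)
        _ = (2 * D ^ 2 * lam1) * (η t / 2 * G ^ 2) * f (θ t) := by ring
        _ ≤ M * (η t / 2 * G ^ 2) * ((f θstar / ε + 1) * δ) := by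
          have := hη t
          have := hnn (θ t)
          gcongr
        _ = C * (η t / 2 * G ^ 2) * δ := by rw [hC]; ring
    have hdec : 1 / C * δ ≤ η t / 2 * G ^ 2 := by
      rw [one_div_mul_eq_div, div_le_iff₀' hCpos]
      exact hkey
    have hexp := mul_le_mul_of_nonneg_right (Real.add_one_le_exp (-(1 / C))) hδ0.le
    have := harm t
    linarith
  have hgeom : ∀ t ≤ T, f (θ t) - f θstar ≤ Real.exp (-(t / C)) * (f (θ 0) - f θstar) := by
    intro t
    induction t with
    | zero => simp
    | succ t ih =>
      intro ht
      calc f (θ (t + 1)) - f θstar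
          ≤ Real.exp (-(1 / C)) * (f (θ t) - f θstar) := hstep t (by omega)
        _ ≤ Real.exp (-(1 / C)) * (Real.exp (-(t / C)) * (f (θ 0) - f θstar)) :=
          mul_le_mul_of_nonneg_left (ih (by omega)) (Real.exp_pos _).le
        _ = Real.exp (-((t + 1 : ℕ) / C)) * (f (θ 0) - f θstar) := by
          rw [← mul_assoc, ← Real.exp_add]
          congr 2
          push_cast
          ring
  have hδ0 : 0 < f (θ 0) - f θstar := hε.trans (hgap 0 (Nat.zero_le T))
  have hlog : Real.log ((f (θ 0) - f θstar) / ε) ≤ T / C := by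
    rw [le_div_iff₀' hCpos]
    exact hT
  have hfin : Real.exp (-(T / C)) * (f (θ 0) - f θstar) ≤ ε := by
    calc Real.exp (-(T / C)) * (f (θ 0) - f θstar)
        ≤ Real.exp (-Real.log ((f (θ 0) - f θstar) / ε)) * (f (θ 0) - f θstar) := by gcongr
      _ = ε := by
        rw [Real.exp_neg, Real.exp_log (div_pos hδ0 hε)]
        field_simp
  linarith [hgeom T le_rfl]
end

section
/- Let f : ℝ^d → ℝ be differentiable, bounded below with f* := inf f ≥ 0, let λ_1 > 0, μ > 0 and ε > 0, and let (θ_t)_{t≥0} be a sequence in ℝ^d such that for every t: f(θ_t) > 0, f(θ_{t+1}) ≤ f(θ_t) − ‖∇f(θ_t)‖² / (λ_1·f(θ_t)), and ‖∇f(θ_t)‖ ≥ μ·(f(θ_t) − f*). Then for every natural number T ≥ max{1, 2λ_1/μ²}·(f*/ε + 1)·ln((f(θ_0) − f*)/ε), one has f(θ_T) − f* ≤ ε. -/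
/-!
Write `δ t = f (θ t) - fstar`. The two hypotheses combine to
`δ (t + 1) ≤ δ t - (μ ^ 2 / lam1) * δ t ^ 2 / (δ t + fstar)`. The sequence `f (θ t)` is antitone, so if
`δ T > ε` then `δ t > ε` for every `t ≤ T`, hence `δ t / (δ t + fstar) ≥ 1 / (fstar / ε + 1)` and `δ` contracts
by the factor `1 - q ≤ exp (-q)` with `q = μ ^ 2 / (lam1 * (fstar / ε + 1))`. Therefore
`δ T ≤ δ 0 * exp (-q * T)`, and the lower bound on `T` makes the right side at most `ε`, a contradiction.
-/

theorem stmt_16 {d : ℕ} (f : EuclideanSpace ℝ (Fin d) → ℝ)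
    (hdiff : Differentiable ℝ f) (hbdd : BddBelow (Set.range f))
    (fstar : ℝ) (hfs : fstar = ⨅ θ, f θ) (hfs0 : 0 ≤ fstar)
    (lam1 μ ε : ℝ) (hlam1 : 0 < lam1) (hμ : 0 < μ) (hε : 0 < ε)
    (θ : ℕ → EuclideanSpace ℝ (Fin d))
    (hpos : ∀ t, 0 < f (θ t))
    (hdec : ∀ t, f (θ (t + 1)) ≤ f (θ t) - ‖gradient f (θ t)‖ ^ 2 / (lam1 * f (θ t)))
    (hgrad : ∀ t, μ * (f (θ t) - fstar) ≤ ‖gradient f (θ t)‖) :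
    ∀ T : ℕ, max 1 (2 * lam1 / μ ^ 2) * (fstar / ε + 1) *
        Real.log ((f (θ 0) - fstar) / ε) ≤ T →
      f (θ T) - fstar ≤ ε := by
  intro T hT
  by_contra! hcon
  have hanti : Antitone (fun t => f (θ t)) := by
    refine antitone_nat_of_succ_le fun t => (hdec t).trans ?_
    have := hpos t
    have : 0 ≤ ‖gradient f (θ t)‖ ^ 2 / (lam1 * f (θ t)) := by positivity
    linarith
  have hlarge : ∀ t ≤ T, ε < f (θ t) - fstar := fun t ht => by
    have : f (θ T) ≤ f (θ t) := hanti ht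
    linarith
  set K := fstar / ε + 1 with hK
  have hKpos : 0 < K := by positivity
  set q := μ ^ 2 / (lam1 * K) with hq
  have hqpos : 0 < q := by positivity
  have hstep : ∀ t ≤ T, f (θ (t + 1)) - fstar ≤ (f (θ t) - fstar) * Real.exp (-q) := by
    intro t ht
    have hδ := hlarge t ht
    have hft := hpos t
    have hδpos : 0 < f (θ t) - fstar := hε.trans hδ
    have hsq : (μ * (f (θ t) - fstar)) ^ 2 ≤ ‖gradient f (θ t)‖ ^ 2 :=
      pow_le_pow_left₀ (by positivity) (hgrad t) 2
    -- `x ↦ (x + fstar) / x` is antitone, so its value at `δ t` is at most its value `K` at `ε`.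
    have hfK : f (θ t) ≤ K * (f (θ t) - fstar) := by
      have h1 : 0 ≤ fstar / ε * (f (θ t) - fstar - ε) :=
        mul_nonneg (by positivity) (by linarith)
      have h2 : fstar / ε * ε = fstar := by field_simp
      rw [hK]; linarith
    have hdrop : q * (f (θ t) - fstar) ≤ ‖gradient f (θ t)‖ ^ 2 / (lam1 * f (θ t)) := by
      rw [le_div_iff₀ (by positivity)]
      calc q * (f (θ t) - fstar) * (lam1 * f (θ t))
          ≤ q * (f (θ t) - fstar) * (lam1 * (K * (f (θ t) - fstar))) := by gcongr
        _ = (μ * (f (θ t) - fstar)) ^ 2 := by rw [hq]; field_simp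
        _ ≤ _ := hsq
    calc f (θ (t + 1)) - fstar ≤ (f (θ t) - fstar) * (1 - q) := by
          have := hdec t
          linarith
      _ ≤ _ := by
          gcongr
          exact Real.one_sub_le_exp_neg q
  have hgeom : ∀ t ≤ T, f (θ t) - fstar ≤ (f (θ 0) - fstar) * Real.exp (-(q * t)) := by
    intro t
    induction t with
    | zero => simp
    | succ n ih =>
      intro hn
      calc f (θ (n + 1)) - fstar ≤ (f (θ n) - fstar) * Real.exp (-q) := hstep n (by omega)
        _ ≤ (f (θ 0) - fstar) * Real.exp (-(q * n)) * Real.exp (-q) := by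
          gcongr
          exact ih (by omega)
        _ = _ := by
          rw [mul_assoc, ← Real.exp_add]
          push_cast
          ring_nf
  have h0 := hlarge 0 (Nat.zero_le T)
  have h0pos : 0 < f (θ 0) - fstar := hε.trans h0
  set l := Real.log ((f (θ 0) - fstar) / ε) with hl
  have hlpos : 0 < l := Real.log_pos ((one_lt_div hε).2 h0)
  have hqT : l ≤ q * T := by
    calc l ≤ 2 * l := by linarith
      _ = q * (2 * lam1 / μ ^ 2 * K * l) := by rw [hq]; field_simp
      _ ≤ q * (max 1 (2 * lam1 / μ ^ 2) * K * l) := by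
          gcongr
          exact le_max_right _ _
      _ ≤ q * T := by gcongr
  have hfin : (f (θ 0) - fstar) * Real.exp (-(q * T)) ≤ ε := by
    calc (f (θ 0) - fstar) * Real.exp (-(q * T))
        ≤ (f (θ 0) - fstar) * Real.exp (-l) := by gcongr
      _ = ε := by
          rw [Real.exp_neg, hl, Real.exp_log (by positivity)]
          field_simp
  linarith [hgeom T le_rfl]
end

section
/- Let f : ℝ^d → ℝ be differentiable and nonnegative, let λ_0 > 0, λ_1 > 0, μ > 0, and ε ∈ (0, λ_0/λ_1). Let (θ_t)_{t≥0} be a sequence in ℝ^d such that for every t: f(θ_{t+1}) ≤ f(θ_t) − ‖∇f(θ_t)‖² / (λ_0 + λ_1·f(θ_t)) and ‖∇f(θ_t)‖² ≥ μ·f(θ_t). Then for every natural number T ≥ (2/μ)·( λ_1·f(θ_0) + λ_0·ln(λ_0/(λ_1·ε)) ), one has f(θ_T) ≤ ε. -/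
/-!
The potential `V a = lam1 * a + lam0 * log a` drops by at least `μ` along each step on which the
values stay positive: by `log x ≤ x - 1`, the change of `V` from `a` to `b` is at most
`(lam1 + lam0 / a) * (b - a)`, and the two hypotheses give
`b - a ≤ -μ * a / (lam0 + lam1 * a)`. If `f (θ T) > ε`, all earlier values are positive, so
`V ε < V (f (θ 0)) - μ * T`. With `L = lam0 / lam1`, the lower bound on `T` turns this into
`ε + f (θ 0) < L * (log (f (θ 0) / L) + log (ε / L))`, whose right-hand side is at most
`ε + f (θ 0) - 2 * L` by `log x ≤ x - 1` again, a contradiction.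
-/

/-- One step of the recursion lowers the potential `lam1 * a + lam0 * log a` by at least `μ`. -/
lemma potential_step {lam0 lam1 μ a b : ℝ} (h0 : 0 < lam0) (h1 : 0 < lam1)
    (ha : 0 < a) (hb : 0 < b) (h : b ≤ a - μ * a / (lam0 + lam1 * a)) :
    lam1 * b + lam0 * Real.log b ≤ lam1 * a + lam0 * Real.log a - μ := by
  have hlog : Real.log b - Real.log a ≤ b / a - 1 := by
    rw [← Real.log_div hb.ne' ha.ne']
    exact Real.log_le_sub_one_of_pos (div_pos hb ha)
  have hD : 0 < lam0 + lam1 * a := by positivity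
  have hmul : (lam1 + lam0 / a) * (b - a) ≤ (lam1 + lam0 / a) * (-(μ * a / (lam0 + lam1 * a))) :=
    mul_le_mul_of_nonneg_left (by linarith) (by positivity)
  have hr : (lam1 + lam0 / a) * (-(μ * a / (lam0 + lam1 * a))) = -μ := by
    field_simp
    ring
  have hl : (lam1 + lam0 / a) * (b - a) = lam1 * (b - a) + lam0 * (b / a - 1) := by
    field_simp
  have := mul_le_mul_of_nonneg_left hlog h0.le
  linarith

theorem stmt_17 {d : ℕ} (f : EuclideanSpace ℝ (Fin d) → ℝ)
    (hdiff : Differentiable ℝ f) (hnn : ∀ θ, 0 ≤ f θ)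
    (lam0 lam1 μ ε : ℝ) (hlam0 : 0 < lam0) (hlam1 : 0 < lam1) (hμ : 0 < μ)
    (hε : ε ∈ Set.Ioo 0 (lam0 / lam1))
    (θ : ℕ → EuclideanSpace ℝ (Fin d))
    (hdec : ∀ t, f (θ (t + 1)) ≤ f (θ t) - ‖gradient f (θ t)‖ ^ 2 / (lam0 + lam1 * f (θ t)))
    (hgrad : ∀ t, μ * f (θ t) ≤ ‖gradient f (θ t)‖ ^ 2) :
    ∀ T : ℕ, (2 / μ) * (lam1 * f (θ 0) + lam0 * Real.log (lam0 / (lam1 * ε))) ≤ T →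
      f (θ T) ≤ ε := by
  intro T hT
  obtain ⟨hε0, hεL⟩ := hε
  by_contra! hlt
  have hstep : ∀ t, f (θ (t + 1)) ≤ f (θ t) - μ * f (θ t) / (lam0 + lam1 * f (θ t)) := by
    intro t
    have hD : 0 < lam0 + lam1 * f (θ t) := by
      have := hnn (θ t)
      positivity
    have := div_le_div_of_nonneg_right (hgrad t) hD.le
    linarith [hdec t]
  have hanti : Antitone fun t => f (θ t) := by
    refine antitone_nat_of_succ_le fun t => ?_
    have := hnn (θ t)
    have : 0 ≤ μ * f (θ t) / (lam0 + lam1 * f (θ t)) := by positivity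
    linarith [hstep t]
  have hpos : ∀ t ≤ T, 0 < f (θ t) := fun t ht => (hε0.trans hlt).trans_le (hanti ht)
  have hV : ∀ t ≤ T, lam1 * f (θ t) + lam0 * Real.log (f (θ t)) ≤
      lam1 * f (θ 0) + lam0 * Real.log (f (θ 0)) - μ * t := by
    intro t
    induction t with
    | zero => simp
    | succ t ih =>
      intro ht
      have := ih (by omega)
      have := potential_step hlam0 hlam1 (hpos t (by omega)) (hpos (t + 1) ht) (hstep t)
      push_cast
      linarith
  have hVT := hV T le_rfl
  have ha := hpos 0 (Nat.zero_le T)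
  have hmT : 2 * (lam1 * f (θ 0) + lam0 * Real.log (lam0 / (lam1 * ε))) ≤ μ * T := by
    have := mul_le_mul_of_nonneg_left hT hμ.le
    rwa [← mul_assoc, mul_div_cancel₀ _ hμ.ne'] at this
  have hlogε := Real.log_le_log hε0 hlt.le
  -- `lam0 * log (x / L) ≤ lam1 * x - lam0` for `L = lam0 / lam1`
  have key : ∀ x, 0 < x →
      lam0 * (Real.log lam1 + Real.log x - Real.log lam0) ≤ lam1 * x - lam0 := by
    intro x hx
    have h := Real.log_le_sub_one_of_pos (show 0 < lam1 * x / lam0 by positivity)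
    rw [Real.log_div (by positivity) hlam0.ne', Real.log_mul hlam1.ne' hx.ne'] at h
    have h' := mul_le_mul_of_nonneg_left h hlam0.le
    rwa [mul_sub lam0 (lam1 * x / lam0) 1, mul_div_cancel₀ _ hlam0.ne', mul_one] at h'
  rw [Real.log_div hlam0.ne' (by positivity), Real.log_mul hlam1.ne' hε0.ne'] at hmT
  have k1 := key _ ha
  have k2 := key _ hε0
  have k3 := mul_le_mul_of_nonneg_left hlogε hlam0.le
  have k4 := mul_lt_mul_of_pos_left hlt hlam1
  linarith
end

section
/- Define f : ℝ → ℝ by f(θ) = (1/2)·( ln(1 + exp(−2θ)) + ln(1 + exp(2θ)) ) (the logistic regression loss for two one-dimensional points with y_1·x_1 = 2 and y_2·x_2 = −2). Then f'(0) = 0 and f''(0) = 1; consequently, there is no constant L_1 ≥ 0 such that |f''(θ)| ≤ L_1·|f'(θ)| holds for all θ ∈ ℝ. -/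
/-- The derivative of the loss, left as a difference of two logistic terms. -/
lemma hasDerivAt_loss (θ : ℝ) :
    HasDerivAt (fun θ : ℝ => (1 / 2) *
      (Real.log (1 + Real.exp (-(2 * θ))) + Real.log (1 + Real.exp (2 * θ))))
      (Real.exp (2 * θ) / (1 + Real.exp (2 * θ))
        - Real.exp (-(2 * θ)) / (1 + Real.exp (-(2 * θ)))) θ := by
  have hlin : HasDerivAt (fun θ : ℝ => 2 * θ) 2 θ := by
    simpa using (hasDerivAt_id θ).const_mul (2 : ℝ)
  have hpos := (hlin.exp.const_add 1).log (by positivity)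
  have hneg := (hlin.neg.exp.const_add 1).log (by simp only [Pi.neg_apply]; positivity)
  refine ((hneg.add hpos).const_mul (1 / 2)).congr_deriv ?_
  simp only [Pi.neg_apply]
  ring

lemma hasDerivAt_deriv_loss_zero :
    HasDerivAt (fun θ : ℝ => Real.exp (2 * θ) / (1 + Real.exp (2 * θ))
        - Real.exp (-(2 * θ)) / (1 + Real.exp (-(2 * θ)))) 1 0 := by
  have hlin : HasDerivAt (fun θ : ℝ => 2 * θ) 2 0 := by
    simpa using (hasDerivAt_id (0 : ℝ)).const_mul (2 : ℝ)
  have hpos := hlin.exp.div (hlin.exp.const_add 1) (by positivity)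
  have hneg := hlin.neg.exp.div (hlin.neg.exp.const_add 1)
    (by simp only [Pi.neg_apply]; positivity)
  refine (hpos.sub hneg).congr_deriv ?_
  norm_num

theorem stmt_19 (f : ℝ → ℝ)
    (hf : ∀ θ, f θ = (1 / 2) *
      (Real.log (1 + Real.exp (-(2 * θ))) + Real.log (1 + Real.exp (2 * θ)))) :
    deriv f 0 = 0 ∧ deriv (deriv f) 0 = 1 ∧
      ¬ ∃ L1 : ℝ, 0 ≤ L1 ∧ ∀ θ, |deriv (deriv f) θ| ≤ L1 * |deriv f θ| := by
  obtain rfl := funext hf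
  have hderiv := funext fun θ => (hasDerivAt_loss θ).deriv
  have h1 := congrFun hderiv 0
  have h2 := hasDerivAt_deriv_loss_zero.deriv
  rw [← hderiv] at h2
  simp only [mul_zero, neg_zero, sub_self] at h1
  refine ⟨h1, h2, ?_⟩
  -- At the critical point `θ = 0` the bound would read `1 ≤ L1 * 0`.
  rintro ⟨L1, -, hL⟩
  have h0 := hL 0
  rw [h1, h2] at h0
  norm_num at h0
end
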